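/- The rational map Φ: R^4 → R^4 defined by Φ(x_1, x_2, x_3, x_4) = (x_2, x_3, x_4, (1 - x_1 - x_3 + x_1 x_2 x_3)/(1 - x_1 - x_3 x_4)) satisfies Φ^{12} = id on the open set where all iterates are defined. -/

import Mathlib

/-- The map `Φ(x₁,x₂,x₃,x₄) = (x₂,x₃,x₄,(1-x₁-x₃+x₁x₂x₃)/(1-x₁-x₃x₄))`. -/
noncomputable def phi4Map (p : ℝ × ℝ × ℝ × ℝ) : ℝ × ℝ × ℝ × ℝ :=
  (p.2.1, p.2.2.1, p.2.2.2,
    (1 - p.1 - p.2.2.1 + p.1 * p.2.1 * p.2.2.1) / (1 - p.1 - p.2.2.1 * p.2.2.2))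

/-!
The first coordinates `x n` of the iterates satisfy
`(1 - x n) (1 - x (n+4)) = x (n+2) (1 - x n x (n+1) - x (n+3) x (n+4))`,
a relation invariant under reversing the order of its five terms. Two consecutive instances give
`(1 - x n) (1 - x (n+5)) = x (n+2) x (n+3)`, and from these one gets
`x (n+7) (1 - x n) (1 - x (n+2)) = x n x (n+2) (1 - x (n+1))`. The last relation at `n + 5` and its
reversal at `n` express `x (n+12)` and `x n`, respectively, by the same formula in
`x (n+5)`, `x (n+6)`, `x (n+7)`.
-/

section CommRing

variable {R : Type*} [CommRing R]

/-- The relation between five consecutive terms of an orbit of `Φ`, obtained by clearing the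
denominator and rearranging so that the symmetry under reversal is visible. -/
def OrbitRel (x₀ x₁ x₂ x₃ x₄ : R) : Prop :=
  (1 - x₀) * (1 - x₄) = x₂ * (1 - x₀ * x₁ - x₃ * x₄)

theorem orbitRel_iff_mul_eq {x₀ x₁ x₂ x₃ x₄ : R} :
    OrbitRel x₀ x₁ x₂ x₃ x₄ ↔ x₄ * (1 - x₀ - x₂ * x₃) = 1 - x₀ - x₂ + x₀ * x₁ * x₂ := by
  unfold OrbitRel
  constructor <;> intro h <;> linear_combination -h

namespace OrbitRel

variable {x₀ x₁ x₂ x₃ x₄ x₅ x₇ : R}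

theorem reverse (h : OrbitRel x₀ x₁ x₂ x₃ x₄) : OrbitRel x₄ x₃ x₂ x₁ x₀ := by
  unfold OrbitRel at h ⊢
  linear_combination h

theorem one_sub_mul_one_sub [IsDomain R] (h₀ : OrbitRel x₀ x₁ x₂ x₃ x₄)
    (h₁ : OrbitRel x₁ x₂ x₃ x₄ x₅) (hd : 1 - x₁ - x₃ * x₄ ≠ 0) :
    (1 - x₀) * (1 - x₅) = x₂ * x₃ := by
  rw [orbitRel_iff_mul_eq] at h₀ h₁
  have denom_eq : 1 - x₀ - x₂ * x₃ = (1 - x₀) * x₅ := by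
    apply mul_right_cancel₀ hd
    calc (1 - x₀ - x₂ * x₃) * (1 - x₁ - x₃ * x₄)
        = (1 - x₀) * (1 - x₁ - x₃ + x₁ * x₂ * x₃) := by linear_combination -x₃ * h₀
      _ = (1 - x₀) * x₅ * (1 - x₁ - x₃ * x₄) := by rw [← h₁, mul_assoc]
  linear_combination denom_eq

theorem mul_one_sub_mul_one_sub (h : OrbitRel x₀ x₁ x₂ x₃ x₄)
    (h₀₅ : (1 - x₀) * (1 - x₅) = x₂ * x₃) (h₂₇ : (1 - x₂) * (1 - x₇) = x₄ * x₅) :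
    x₇ * ((1 - x₀) * (1 - x₂)) = x₀ * x₂ * (1 - x₁) := by
  rw [orbitRel_iff_mul_eq] at h
  calc x₇ * ((1 - x₀) * (1 - x₂))
      = (1 - x₀) * (1 - x₂) - x₄ * ((1 - x₀) * x₅) := by linear_combination -(1 - x₀) * h₂₇
    _ = (1 - x₀) * (1 - x₂) - x₄ * (1 - x₀ - x₂ * x₃) := by linear_combination x₄ * h₀₅
    _ = x₀ * x₂ * (1 - x₁) := by linear_combination -h

end OrbitRel

/-- The first `N` steps of the recurrence `OrbitRel` hold along `x`, each with a nonzero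
denominator; this constrains the terms `x 0, …, x (N + 3)`. -/
structure IsRegularOrbit (x : ℕ → R) (N : ℕ) : Prop where
  denom_ne_zero : ∀ n < N, 1 - x n - x (n + 2) * x (n + 3) ≠ 0
  rel : ∀ n < N, OrbitRel (x n) (x (n + 1)) (x (n + 2)) (x (n + 3)) (x (n + 4))

namespace IsRegularOrbit

variable [IsDomain R] {x : ℕ → R} {N n : ℕ}

theorem one_sub_mul_one_sub (hx : IsRegularOrbit x N) (hn : n + 1 < N) :
    (1 - x n) * (1 - x (n + 5)) = x (n + 2) * x (n + 3) :=
  (hx.rel n (by lia)).one_sub_mul_one_sub (hx.rel (n + 1) hn) (hx.denom_ne_zero (n + 1) hn)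

theorem one_sub_ne_zero (hx : IsRegularOrbit x N) (hn : n + 1 < N) : 1 - x n ≠ 0 := by
  have denom_eq : 1 - x n - x (n + 2) * x (n + 3) = (1 - x n) * x (n + 5) := by
    linear_combination hx.one_sub_mul_one_sub hn
  exact left_ne_zero_of_mul (denom_eq ▸ hx.denom_ne_zero n (by lia))

theorem mul_one_sub_mul_one_sub (hx : IsRegularOrbit x N) (hn : n + 3 < N) :
    x (n + 7) * ((1 - x n) * (1 - x (n + 2))) = x n * x (n + 2) * (1 - x (n + 1)) :=
  (hx.rel n (by lia)).mul_one_sub_mul_one_sub (hx.one_sub_mul_one_sub (by lia))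
    (hx.one_sub_mul_one_sub (n := n + 2) hn)

theorem mul_one_sub_mul_one_sub_reverse (hx : IsRegularOrbit x N) (hn : n + 3 < N) :
    x n * ((1 - x (n + 7)) * (1 - x (n + 5))) = x (n + 7) * x (n + 5) * (1 - x (n + 6)) := by
  have h₇₂ : (1 - x (n + 7)) * (1 - x (n + 2)) = x (n + 5) * x (n + 4) := by
    linear_combination hx.one_sub_mul_one_sub (n := n + 2) hn
  have h₅₀ : (1 - x (n + 5)) * (1 - x n) = x (n + 3) * x (n + 2) := by
    linear_combination hx.one_sub_mul_one_sub (n := n) (by lia)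
  exact (hx.rel (n + 3) hn).reverse.mul_one_sub_mul_one_sub h₇₂ h₅₀

theorem apply_add_twelve (hx : IsRegularOrbit x N) (hn : n + 8 < N) : x (n + 12) = x n := by
  have h₅ : 1 - x (n + 5) ≠ 0 := hx.one_sub_ne_zero (by lia)
  have h₇ : 1 - x (n + 7) ≠ 0 := hx.one_sub_ne_zero (by lia)
  apply mul_right_cancel₀ (mul_ne_zero h₇ h₅)
  calc x (n + 12) * ((1 - x (n + 7)) * (1 - x (n + 5)))
      = x (n + 7) * x (n + 5) * (1 - x (n + 6)) := by
        linear_combination hx.mul_one_sub_mul_one_sub (n := n + 5) hn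
    _ = x n * ((1 - x (n + 7)) * (1 - x (n + 5))) :=
        (hx.mul_one_sub_mul_one_sub_reverse (by lia)).symm

end IsRegularOrbit

end CommRing

section Field

variable {K : Type*} [Field K]

/-- The map `Φ` over an arbitrary field; `phi4Map` is the case `K = ℝ`. As there, the last
coordinate is `0` where the denominator vanishes. -/
def phiMap (p : K × K × K × K) : K × K × K × K :=
  (p.2.1, p.2.2.1, p.2.2.2,
    (1 - p.1 - p.2.2.1 + p.1 * p.2.1 * p.2.2.1) / (1 - p.1 - p.2.2.1 * p.2.2.2))

theorem orbitRel_phiMap {p : K × K × K × K} (hp : 1 - p.1 - p.2.2.1 * p.2.2.2 ≠ 0) :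
    OrbitRel p.1 p.2.1 p.2.2.1 p.2.2.2 (phiMap p).2.2.2 :=
  orbitRel_iff_mul_eq.2 (div_mul_cancel₀ _ hp)

theorem iterate_phiMap_eq (p : K × K × K × K) (n : ℕ) :
    phiMap^[n] p =
      ((phiMap^[n] p).1, (phiMap^[n + 1] p).1, (phiMap^[n + 2] p).1, (phiMap^[n + 3] p).1) := by
  simp only [Function.iterate_succ_apply']
  rfl

theorem isRegularOrbit_iterate_phiMap {p : K × K × K × K} {N : ℕ}
    (hp : ∀ n < N, 1 - (phiMap^[n] p).1 - (phiMap^[n] p).2.2.1 * (phiMap^[n] p).2.2.2 ≠ 0) :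
    IsRegularOrbit (fun n ↦ (phiMap^[n] p).1) N where
  denom_ne_zero n hn := by
    have h := hp n hn
    rwa [iterate_phiMap_eq p n] at h
  rel n hn := by
    have h := orbitRel_phiMap (hp n hn)
    rwa [← Function.iterate_succ_apply' phiMap n p, iterate_phiMap_eq p n,
      iterate_phiMap_eq p (n + 1)] at h

theorem stmt6_general (p : K × K × K × K)
    (hdef : ∀ m < 12,
      1 - (phiMap^[m] p).1 - (phiMap^[m] p).2.2.1 * (phiMap^[m] p).2.2.2 ≠ 0) :
    phiMap^[12] p = p := by
  have period : ∀ n < 4, (phiMap^[n + 12] p).1 = (phiMap^[n] p).1 := fun n hn ↦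
    (isRegularOrbit_iterate_phiMap hdef).apply_add_twelve (by lia)
  calc phiMap^[12] p
      = ((phiMap^[0 + 12] p).1, (phiMap^[1 + 12] p).1, (phiMap^[2 + 12] p).1,
          (phiMap^[3 + 12] p).1) := iterate_phiMap_eq p 12
    _ = ((phiMap^[0] p).1, (phiMap^[1] p).1, (phiMap^[2] p).1, (phiMap^[3] p).1) := by
        rw [period 0, period 1, period 2, period 3] <;> norm_num
    _ = p := (iterate_phiMap_eq p 0).symm

end Field

/-- The rational map `Φ` is 12-periodic wherever all iterates are defined. -/
theorem stmt6 (p : ℝ × ℝ × ℝ × ℝ)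
    (hdef : ∀ m < 12,
      1 - (phi4Map^[m] p).1 - (phi4Map^[m] p).2.2.1 * (phi4Map^[m] p).2.2.2 ≠ 0) :
    phi4Map^[12] p = p :=
  stmt6_general p hdef
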